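/- arXiv:math/0011150 — 2 statements merged into one kernel-verified Lean document; each statement's English description precedes it below -/
import Mathlib

section
/- Lemma 3.1: let α > 0, let p_1, …, p_n ∈ (0,1), set r_j = p_j/(1−p_j) and ū = max_j(−1/r_j) < 0, and assume (α/n)·Σ_{j=1}^n r_j < 1. Then the equation (α/n)·Σ_{j=1}^n r_j/(1+r_j u)² = 1/(u−1)² has a unique solution u in the interval (ū, 0), and the number c defined by c = 1/(1−u) − (α/n)·Σ_{j=1}^n r_j u/(1+r_j u) satisfies 0 < c < 1. -/
open MeasureTheory ProbabilityTheory Filter Set Topology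

/-- Lemma 3.1: let `α > 0`, `p 0, …, p (n−1) ∈ (0,1)`,
`r j = p j/(1 − p j)`, and `ū = max_j (−1/r j) < 0`; assume `(α/n)·Σ r j < 1`.
Then `(α/n)·Σ r j/(1 + r j·u)² = 1/(u−1)²` has a unique solution `u ∈ (ū, 0)`, and
for this solution the number `c = 1/(1−u) − (α/n)·Σ r j·u/(1 + r j·u)` satisfies
`0 < c < 1`. -/
theorem stmt_14
    (α : ℝ) (hα : 0 < α) (n : ℕ) (hn : 0 < n)
    (p : Fin n → ℝ) (hp : ∀ j, p j ∈ Set.Ioo (0:ℝ) 1)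
    (r : Fin n → ℝ) (hr : ∀ j, r j = p j / (1 - p j))
    (ub : ℝ) (hub : IsGreatest (Set.range fun j => -1 / r j) ub)
    (hsum : (α / n) * ∑ j, r j < 1) :
    (∃! u : ℝ, u ∈ Set.Ioo ub 0 ∧
        (α / n) * ∑ j, r j / (1 + r j * u) ^ 2 = 1 / (u - 1) ^ 2) ∧
      ∀ u ∈ Set.Ioo ub 0,
        (α / n) * ∑ j, r j / (1 + r j * u) ^ 2 = 1 / (u - 1) ^ 2 →
          (1 / (1 - u) - (α / n) * ∑ j, r j * u / (1 + r j * u)) ∈ Set.Ioo (0:ℝ) 1 := by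
  have hr0 : ∀ j, 0 < r j := fun j => by
    rw [hr j]; exact div_pos (hp j).1 (by linarith [(hp j).2])
  have hn' : (0:ℝ) < n := by exact_mod_cast hn
  obtain ⟨w, hw⟩ : ∃ w, w = α / (n:ℝ) := ⟨_, rfl⟩
  have hw0 : 0 < w := by rw [hw]; positivity
  rw [← hw] at hsum ⊢
  obtain ⟨⟨j0, hj0⟩, hmax⟩ := hub
  simp only at hj0
  have hpos : ∀ u, ub < u → ∀ j, 0 < 1 + r j * u := by
    intro u hu j
    have h1 : -1 / r j ≤ ub := hmax ⟨j, rfl⟩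
    have h2 : -1 / r j < u := lt_of_le_of_lt h1 hu
    rw [div_lt_iff₀ (hr0 j)] at h2
    linarith
  have heq : ∀ u, u < 0 → (w * ∑ j, r j / (1 + r j * u) ^ 2 = 1 / (u - 1) ^ 2 ↔
      w * ∑ j, r j * ((1 - u) / (1 + r j * u)) ^ 2 = 1) := by
    intro u hu
    have h1 : (u - 1) ^ 2 ≠ 0 := pow_ne_zero _ (by linarith)
    rw [eq_div_iff h1, mul_assoc, Finset.sum_mul]
    have : ∀ j, r j / (1 + r j * u) ^ 2 * (u - 1) ^ 2 = r j * ((1 - u) / (1 + r j * u)) ^ 2 := by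
      intro j; rw [div_pow]; ring
    simp only [this]
  have hne : (Finset.univ : Finset (Fin n)).Nonempty := ⟨j0, Finset.mem_univ _⟩
  have hanti : ∀ a b, ub < a → a < b → b ≤ 0 →
      w * ∑ j, r j * ((1 - b) / (1 + r j * b)) ^ 2
        < w * ∑ j, r j * ((1 - a) / (1 + r j * a)) ^ 2 := by
    intro a b ha hab hb
    refine mul_lt_mul_of_pos_left (Finset.sum_lt_sum_of_nonempty hne fun j _ => ?_) hw0
    have h1 := hpos a ha j
    have h2 := hpos b (ha.trans hab) j
    refine mul_lt_mul_of_pos_left (pow_lt_pow_left₀ ?_ ?_ two_ne_zero) (hr0 j)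
    · rw [div_lt_div_iff₀ h2 h1]
      nlinarith [hr0 j, mul_pos (hr0 j) (sub_pos.2 hab)]
    · exact div_nonneg (by linarith) h2.le
  refine ⟨?_, ?_⟩
  · have hle : r j0 ≤ ∑ j, r j :=
      Finset.single_le_sum (f := r) (fun j _ => (hr0 j).le) (Finset.mem_univ j0)
    have he0 : 0 < w * r j0 := mul_pos hw0 (hr0 j0)
    have he1 : w * r j0 < 1 := lt_of_le_of_lt (mul_le_mul_of_nonneg_left hle hw0.le) hsum
    obtain ⟨v, hv⟩ : ∃ v, v = (w * r j0 - 1) / r j0 := ⟨_, rfl⟩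
    have hv1 : 1 + r j0 * v = w * r j0 := by
      have := (hr0 j0).ne'
      rw [hv]; field_simp; ring
    have hv0 : v < 0 := by rw [hv]; exact div_neg_of_neg_of_pos (by linarith) (hr0 j0)
    have hvub : ub < v := by
      rw [← hj0, hv]; exact div_lt_div_of_pos_right (by linarith) (hr0 j0)
    have hgv : 1 < w * ∑ j, r j * ((1 - v) / (1 + r j * v)) ^ 2 := by
      have h1 : r j0 * ((1 - v) / (1 + r j0 * v)) ^ 2
          ≤ ∑ j, r j * ((1 - v) / (1 + r j * v)) ^ 2 :=
        Finset.single_le_sum (f := fun j => r j * ((1 - v) / (1 + r j * v)) ^ 2)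
          (fun j _ => mul_nonneg (hr0 j).le (sq_nonneg _)) (Finset.mem_univ j0)
      refine lt_of_lt_of_le ?_ (mul_le_mul_of_nonneg_left h1 hw0.le)
      rw [hv1, ← mul_assoc, div_pow, ← mul_div_assoc, lt_div_iff₀ (by positivity)]
      have h3 : 1 < (1 - v) ^ 2 := by nlinarith
      have h4 := mul_lt_mul_of_pos_left (he1.trans h3) he0
      linarith [sq (w * r j0)]
    have hg0 : w * ∑ j, r j * ((1 - 0) / (1 + r j * 0)) ^ 2 < 1 := by simpa using hsum
    have hcont : ContinuousOn (fun u => w * ∑ j, r j * ((1 - u) / (1 + r j * u)) ^ 2)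
        (Set.Icc v 0) := by
      refine continuousOn_const.mul (continuousOn_finsetSum _ fun j _ => ?_)
      refine continuousOn_const.mul (ContinuousOn.pow (ContinuousOn.div (by fun_prop) (by fun_prop)
        fun x hx => (hpos x (lt_of_lt_of_le hvub hx.1) j).ne') 2)
    obtain ⟨u, hu, hu1⟩ := intermediate_value_Ioo' hv0.le hcont ⟨hg0, hgv⟩
    refine ⟨u, ⟨⟨hvub.trans hu.1, hu.2⟩, (heq u hu.2).2 hu1⟩, ?_⟩
    rintro y ⟨hy, hy1⟩
    rw [heq y hy.2] at hy1
    simp only at hu1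
    rcases lt_trichotomy y u with h | h | h
    · have := hanti y u hy.1 h hu.2.le
      linarith
    · exact h
    · have := hanti u y (hvub.trans hu.1) h hy.2.le
      linarith
  · intro u hu h
    have hS : ∑ j, r j * u / (1 + r j * u) = u * ∑ j, r j / (1 + r j * u) := by
      rw [Finset.mul_sum]; refine Finset.sum_congr rfl fun j _ => ?_
      ring
    rw [hS]
    obtain ⟨S, hSd⟩ : ∃ S, S = ∑ j, r j / (1 + r j * u) := ⟨_, rfl⟩
    have hS0 : 0 < S := by
      rw [hSd]; exact Finset.sum_pos (fun j _ => div_pos (hr0 j) (hpos u hu.1 j)) hne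
    have hcs : S ^ 2 ≤ (∑ j, r j) * ∑ j, r j / (1 + r j * u) ^ 2 := by
      rw [hSd]
      refine Finset.sum_sq_le_sum_mul_sum_of_sq_eq_mul _ (fun j _ => (hr0 j).le)
        (fun j _ => div_nonneg (hr0 j).le (sq_nonneg _)) (fun j _ => ?_)
      rw [div_pow]; ring
    rw [← hSd]
    have hu0 := hu.2
    have h1u : 0 < 1 - u := by linarith
    have hsq : (w * S) ^ 2 < (1 / (1 - u)) ^ 2 := by
      have e : (1 / (1 - u)) ^ 2 = 1 / (u - 1) ^ 2 := by
        rw [div_pow, one_pow]; congr 1; ring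
      have hp1 : 0 < 1 / (u - 1) ^ 2 := by rw [← e]; positivity
      calc (w * S) ^ 2 = w ^ 2 * S ^ 2 := by ring
        _ ≤ w ^ 2 * ((∑ j, r j) * ∑ j, r j / (1 + r j * u) ^ 2) := by gcongr
        _ = (w * ∑ j, r j) * (w * ∑ j, r j / (1 + r j * u) ^ 2) := by ring
        _ = (w * ∑ j, r j) * (1 / (u - 1) ^ 2) := by rw [h]
        _ < 1 * (1 / (u - 1) ^ 2) := mul_lt_mul_of_pos_right hsum hp1
        _ = _ := by rw [e, one_mul]
    have hlt : w * S < 1 / (1 - u) := lt_of_pow_lt_pow_left₀ 2 (by positivity) hsq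
    have hq : 0 < 1 / (1 - u) := by positivity
    have hq1 : 1 / (1 - u) * (1 - u) = 1 := by field_simp
    constructor
    · nlinarith [mul_pos hw0 hS0]
    · nlinarith
end

section
/- Lemma 3.2: let F be a distribution function on [0,1] with b = b(F) < 1, set ξ = 1 − 1/b < 0, and assume α'_c < α < α_c. Then, writing r = p/(1−p) for p with law F, the equation α·⟨r/(1+r u₀)²⟩ = 1/(u₀−1)² has a unique solution u₀ in the interval (ξ, 0), and the number c₀ defined by c₀ = 1/(1−u₀) − α·⟨r u₀/(1+r u₀)⟩ satisfies 0 < c₀ < 1. -/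
open MeasureTheory ProbabilityTheory Filter Set Topology

lemma aux_ae (μ : Measure ℝ) [IsProbabilityMeasure μ] (hsupp : μ (Set.Icc 0 1) = 1)
    (b : ℝ) (hb : b = sInf {s : ℝ | μ (Set.Iic s) = 1}) :
    ∀ᵐ x ∂μ, 0 ≤ x ∧ x ≤ b := by
  have h1 : ∀ᵐ x ∂μ, x ∈ Set.Icc (0:ℝ) 1 := (prob_compl_eq_zero_iff measurableSet_Icc).2 hsupp
  have hne : {s : ℝ | μ (Set.Iic s) = 1}.Nonempty := by
    refine ⟨1, le_antisymm prob_le_one ?_⟩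
    rw [← hsupp]
    exact measure_mono Icc_subset_Iic_self
  have h2 : ∀ n : ℕ, ∀ᵐ x ∂μ, x ≤ b + 1 / ((n:ℝ) + 1) := by
    intro n
    have hlt : sInf {s : ℝ | μ (Set.Iic s) = 1} < b + 1 / ((n:ℝ) + 1) := by
      rw [← hb]
      have : 0 < 1 / ((n:ℝ) + 1) := by positivity
      linarith
    obtain ⟨s, hs, hsl⟩ := exists_lt_of_csInf_lt hne hlt
    have h3 : ∀ᵐ x ∂μ, x ∈ Set.Iic s := (prob_compl_eq_zero_iff measurableSet_Iic).2 hs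
    filter_upwards [h3] with x hx
    exact le_trans hx hsl.le
  filter_upwards [h1, ae_all_iff.2 h2] with x hx hx2
  refine ⟨hx.1, le_of_forall_pos_le_add ?_⟩
  intro ε hε
  obtain ⟨n, hn⟩ := exists_nat_one_div_lt hε
  linarith [hx2 n]

lemma aux_bound {b w x : ℝ} (hb1 : b < 1) (hw : b < w) (hx : 0 ≤ x ∧ x ≤ b) :
    0 ≤ x * (1 - x) / (w - x) ^ 2 ∧ x * (1 - x) / (w - x) ^ 2 ≤ 1 / (w - b) ^ 2 := by
  obtain ⟨h0, h1⟩ := hx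
  have : 0 ≤ x * (1 - x) := mul_nonneg h0 (by linarith)
  refine ⟨by positivity, ?_⟩
  have : 0 < w - b := by linarith
  gcongr
  nlinarith

lemma aux_int (μ : Measure ℝ) [IsProbabilityMeasure μ] {b : ℝ} (hb1 : b < 1)
    (hae : ∀ᵐ x ∂μ, 0 ≤ x ∧ x ≤ b) {w : ℝ} (hw : b < w) :
    Integrable (fun x => x * (1 - x) / (w - x) ^ 2) μ := by
  refine Integrable.of_bound (C := 1 / (w - b) ^ 2) (Measurable.aestronglyMeasurable (by fun_prop)) ?_
  filter_upwards [hae] with x hx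
  have := aux_bound hb1 hw hx
  rw [Real.norm_of_nonneg this.1]
  exact this.2

lemma aux_int2 (μ : Measure ℝ) [IsProbabilityMeasure μ] {b : ℝ} (hb1 : b < 1)
    (hae : ∀ᵐ x ∂μ, 0 ≤ x ∧ x ≤ b) {w : ℝ} (hw : b < w) :
    Integrable (fun x => x / (w - x)) μ := by
  refine Integrable.of_bound (C := 1 / (w - b)) (Measurable.aestronglyMeasurable (by fun_prop)) ?_
  filter_upwards [hae] with x hx
  have h1 : 0 < w - b := by linarith
  have h2 : 0 < w - x := by linarith [hx.2]
  have h3 := hx.1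
  rw [Real.norm_of_nonneg (by positivity)]
  gcongr
  · linarith [hx.2]
  · exact hx.2

lemma aux_lt (μ : Measure ℝ) (hne : ¬ ∀ᵐ x ∂μ, x = 0) {f g : ℝ → ℝ}
    (hf : Integrable f μ) (hg : Integrable g μ) (hle : ∀ᵐ x ∂μ, f x ≤ g x)
    (hlt : ∀ᵐ x ∂μ, x ≠ 0 → f x < g x) : ∫ x, f x ∂μ < ∫ x, g x ∂μ := by
  refine lt_of_le_of_ne (integral_mono_ae hf hg hle) ?_
  intro h
  apply hne
  have := (integral_eq_iff_of_ae_le hf hg hle).1 h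
  filter_upwards [this, hlt] with x h1 h2
  by_contra h3
  exact absurd h1 (h2 h3).ne

lemma aux_cont (μ : Measure ℝ) [IsProbabilityMeasure μ] {b : ℝ} (hb1 : b < 1)
    (hae : ∀ᵐ x ∂μ, 0 ≤ x ∧ x ≤ b) {w : ℝ} (hw : b < w) :
    ContinuousOn (fun v => ∫ x, x * (1 - x) / (v - x) ^ 2 ∂μ) (Set.Icc w 1) := by
  refine continuousOn_of_dominated (bound := fun _ => 1 / (w - b) ^ 2) ?_ ?_ ?_ ?_
  · intro v _
    exact Measurable.aestronglyMeasurable (by fun_prop)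
  · intro v hv
    filter_upwards [hae] with x hx
    have := aux_bound hb1 (lt_of_lt_of_le hw hv.1) hx
    rw [Real.norm_of_nonneg this.1]
    refine this.2.trans ?_
    have : 0 < w - b := by linarith
    have := hv.1
    gcongr
  · exact integrable_const _
  · filter_upwards [hae] with x hx
    refine ContinuousOn.div (by fun_prop) (by fun_prop) ?_
    intro v hv
    have : 0 < v - x := by linarith [hv.1, hx.2]
    positivity

lemma aux_near (μ : Measure ℝ) [IsProbabilityMeasure μ] {b : ℝ} (hb1 : b < 1)
    (hae : ∀ᵐ x ∂μ, 0 ≤ x ∧ x ≤ b) {α : ℝ} (hα : 0 < α)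
    (hαc' : 1 < ENNReal.ofReal α * ∫⁻ x, ENNReal.ofReal (x * (1 - x) / (b - x) ^ 2) ∂μ) :
    ∃ w, b < w ∧ w < 1 ∧ 1 < α * ∫ x, x * (1 - x) / (w - x) ^ 2 ∂μ := by
  by_contra! hcon
  set w : ℕ → ℝ := fun n => b + (1 - b) / ((n:ℝ) + 2) with hwdef
  have hw1 : ∀ n, b < w n := by
    intro n
    have : 0 < (1 - b) / ((n:ℝ) + 2) := div_pos (by linarith) (by positivity)
    simp only [hwdef]; linarith
  have hw2 : ∀ n, w n < 1 := by
    intro n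
    have : (1 - b) / ((n:ℝ) + 2) < 1 - b := div_lt_self (by linarith) (by
      have : (0:ℝ) ≤ n := n.cast_nonneg
      linarith)
    simp only [hwdef]; linarith
  have hwt : Tendsto w atTop (𝓝 b) := by
    have h := (tendsto_natCast_atTop_atTop (R := ℝ)).atTop_add (tendsto_const_nhds (x := (2:ℝ)))
    have h := (tendsto_const_nhds (x := 1 - b)).div_atTop h
    simpa using h.const_add b
  have hle : ∀ n, ENNReal.ofReal α *
      ∫⁻ x, ENNReal.ofReal (x * (1 - x) / (w n - x) ^ 2) ∂μ ≤ 1 := by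
    intro n
    rw [← ofReal_integral_eq_lintegral_ofReal (aux_int μ hb1 hae (hw1 n))
      (by filter_upwards [hae] with x hx using (aux_bound hb1 (hw1 n) hx).1),
      ← ENNReal.ofReal_mul hα.le]
    exact ENNReal.ofReal_le_one.2 (hcon _ (hw1 n) (hw2 n))
  have hfat := lintegral_liminf_le (μ := μ) (u := atTop)
    (f := fun n x => ENNReal.ofReal α * ENNReal.ofReal (x * (1 - x) / (w n - x) ^ 2)) (by
      intro n; fun_prop)
  have h1 : liminf (fun n => ∫⁻ x, ENNReal.ofReal α *
      ENNReal.ofReal (x * (1 - x) / (w n - x) ^ 2) ∂μ) atTop ≤ 1 := by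
    refine liminf_le_of_frequently_le' (Frequently.of_forall ?_)
    intro n
    rw [lintegral_const_mul _ (by fun_prop)]
    exact hle n
  have h2 : ENNReal.ofReal α * ∫⁻ x, ENNReal.ofReal (x * (1 - x) / (b - x) ^ 2) ∂μ ≤
      ∫⁻ x, liminf (fun n => ENNReal.ofReal α *
      ENNReal.ofReal (x * (1 - x) / (w n - x) ^ 2)) atTop ∂μ := by
    rw [← lintegral_const_mul _ (by fun_prop)]
    refine lintegral_mono_ae ?_
    filter_upwards [hae] with x hx
    rcases eq_or_ne x b with h | h
    · simp [h]
    · have hne : b - x ≠ 0 := sub_ne_zero.2 h.symm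
      refine le_of_eq (Tendsto.liminf_eq ?_).symm
      refine ENNReal.Tendsto.const_mul ?_ (Or.inr ENNReal.ofReal_ne_top)
      refine ENNReal.tendsto_ofReal ?_
      exact tendsto_const_nhds.div ((hwt.sub_const x).pow 2) (pow_ne_zero 2 hne)
  exact not_le.2 hαc' (h2.trans (hfat.trans h1))

/-- Lemma 3.2: let `μ` be the law on `[0,1]` with distribution function
`F`, `b = b(F) < 1`, `ξ = 1 − 1/b`, and assume `α'_c < α < α_c` (expressed as
`α·⟨p/(1−p)⟩ < 1` and `α·⟨p(1−p)/(b−p)²⟩ > 1`, with lower Lebesgue integrals).  Then,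
writing `r = p/(1−p)`, the equation `α·⟨r/(1+r·u₀)²⟩ = 1/(u₀−1)²` has a unique solution
`u₀ ∈ (ξ, 0)`, and for this solution `c₀ = 1/(1−u₀) − α·⟨r·u₀/(1+r·u₀)⟩` satisfies
`0 < c₀ < 1`. -/
theorem stmt_15
    (μ : Measure ℝ) [IsProbabilityMeasure μ] (hsupp : μ (Set.Icc 0 1) = 1)
    (b : ℝ) (hb : b = sInf {s : ℝ | μ (Set.Iic s) = 1}) (hb1 : b < 1)
    (ξ : ℝ) (hξ : ξ = 1 - 1 / b)
    (α : ℝ) (hα : 0 < α)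
    (hαc : ENNReal.ofReal α * ∫⁻ x, ENNReal.ofReal (x / (1 - x)) ∂μ < 1)
    (hαc' : 1 < ENNReal.ofReal α * ∫⁻ x, ENNReal.ofReal (x * (1 - x) / (b - x) ^ 2) ∂μ) :
    (∃! u₀ : ℝ, u₀ ∈ Set.Ioo ξ 0 ∧
        α * ∫ x, (x / (1 - x)) / (1 + (x / (1 - x)) * u₀) ^ 2 ∂μ = 1 / (u₀ - 1) ^ 2) ∧
      ∀ u₀ ∈ Set.Ioo ξ 0,
        α * ∫ x, (x / (1 - x)) / (1 + (x / (1 - x)) * u₀) ^ 2 ∂μ = 1 / (u₀ - 1) ^ 2 →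
          (1 / (1 - u₀) - α * ∫ x, (x / (1 - x)) * u₀ / (1 + (x / (1 - x)) * u₀) ∂μ) ∈
            Set.Ioo (0:ℝ) 1 := by
  have hae := aux_ae μ hsupp b hb
  have hne : ¬ ∀ᵐ x ∂μ, x = 0 := by
    intro h
    have : ∫⁻ x, ENNReal.ofReal (x * (1 - x) / (b - x) ^ 2) ∂μ = 0 := by
      rw [lintegral_eq_zero_iff (by fun_prop)]
      filter_upwards [h] with x hx
      simp [hx]
    rw [this] at hαc'
    simp at hαc'
  have hb0 : 0 < b := by
    by_contra hb0
    apply hne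
    filter_upwards [hae] with x hx
    linarith [hx.1, hx.2]
  have hξ0 : 1 - ξ = b⁻¹ := by rw [hξ]; simp
  have hwr : ∀ u ∈ Set.Ioo ξ 0, b < (1 - u)⁻¹ ∧ (1 - u)⁻¹ < 1 := by
    intro u hu
    have h1 : 0 < 1 - u := by linarith [hu.2]
    constructor
    · rw [lt_inv_comm₀ hb0 h1]; linarith [hu.1]
    · exact inv_lt_one_of_one_lt₀ (by linarith [hu.2])
  have hI : ∀ u ∈ Set.Ioo ξ 0, ∫ x, (x / (1 - x)) / (1 + (x / (1 - x)) * u) ^ 2 ∂μ =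
      (1 / (u - 1) ^ 2) * ∫ x, x * (1 - x) / ((1 - u)⁻¹ - x) ^ 2 ∂μ := by
    intro u hu
    rw [← integral_const_mul]
    refine integral_congr_ae ?_
    filter_upwards [hae] with x hx
    have h1 : 0 < 1 - u := by linarith [hu.2]
    have h2 : 0 < 1 - x := by linarith [hx.2]
    have h3 : 0 < (1 - u)⁻¹ - x := by linarith [hx.2, (hwr u hu).1]
    have e1 : (1 - u)⁻¹ - x = (1 - x * (1 - u)) / (1 - u) := by field_simp
    have h4 : 0 < 1 - x * (1 - u) := by
      rw [e1] at h3
      exact (div_pos_iff_of_pos_right h1).1 h3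
    have e2 : 1 + x / (1 - x) * u = (1 - x * (1 - u)) / (1 - x) := by field_simp; ring
    have e3 : (u - 1) ^ 2 = (1 - u) ^ 2 := by ring
    simp only [e1, e2, e3]
    field_simp
  have hK : ∀ u ∈ Set.Ioo ξ 0, ∫ x, (x / (1 - x)) * u / (1 + (x / (1 - x)) * u) ∂μ =
      ((1 - u)⁻¹ - 1) * ∫ x, x / ((1 - u)⁻¹ - x) ∂μ := by
    intro u hu
    rw [← integral_const_mul]
    refine integral_congr_ae ?_
    filter_upwards [hae] with x hx
    have h1 : 0 < 1 - u := by linarith [hu.2]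
    have h2 : 0 < 1 - x := by linarith [hx.2]
    have h3 : 0 < (1 - u)⁻¹ - x := by linarith [hx.2, (hwr u hu).1]
    have e1 : (1 - u)⁻¹ - x = (1 - x * (1 - u)) / (1 - u) := by field_simp
    have h4 : 0 < 1 - x * (1 - u) := by
      rw [e1] at h3
      exact (div_pos_iff_of_pos_right h1).1 h3
    have e2 : 1 + x / (1 - x) * u = (1 - x * (1 - u)) / (1 - x) := by field_simp; ring
    have e3 : (1 - u)⁻¹ - 1 = u / (1 - u) := by field_simp; ring
    simp only [e1, e2, e3]
    field_simp
  have hiff : ∀ u ∈ Set.Ioo ξ 0,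
      (α * ∫ x, (x / (1 - x)) / (1 + (x / (1 - x)) * u) ^ 2 ∂μ = 1 / (u - 1) ^ 2 ↔
        α * ∫ x, x * (1 - x) / ((1 - u)⁻¹ - x) ^ 2 ∂μ = 1) := by
    intro u hu
    rw [hI u hu]
    have h1 : 0 < 1 / (u - 1) ^ 2 := by
      have : u - 1 ≠ 0 := by linarith [hu.2]
      positivity
    rw [mul_left_comm]
    exact mul_eq_left₀ h1.ne'
  have hanti : ∀ v w : ℝ, b < v → v < w →
      ∫ x, x * (1 - x) / (w - x) ^ 2 ∂μ < ∫ x, x * (1 - x) / (v - x) ^ 2 ∂μ := by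
    intro v w hv hvw
    have key : ∀ᵐ x ∂μ, x ≠ 0 →
        x * (1 - x) / (w - x) ^ 2 < x * (1 - x) / (v - x) ^ 2 := by
      filter_upwards [hae] with x hx hx0
      have h0 : 0 < x := lt_of_le_of_ne hx.1 (Ne.symm hx0)
      have h1 : 0 < v - x := by linarith [hx.2]
      have h2 : 0 < 1 - x := by linarith [hx.2]
      have h3 : 0 < x * (1 - x) := mul_pos h0 h2
      gcongr
    refine aux_lt μ hne (aux_int μ hb1 hae (hv.trans hvw)) (aux_int μ hb1 hae hv) ?_ key
    filter_upwards [key] with x hx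
    rcases eq_or_ne x 0 with h | h
    · simp [h]
    · exact (hx h).le
  have hone : α * ∫ x, x * (1 - x) / (1 - x) ^ 2 ∂μ < 1 := by
    have e : ∫⁻ x, ENNReal.ofReal (x / (1 - x)) ∂μ =
        ∫⁻ x, ENNReal.ofReal (x * (1 - x) / (1 - x) ^ 2) ∂μ := by
      refine lintegral_congr_ae ?_
      filter_upwards [hae] with x hx
      have h2 : 1 - x ≠ 0 := by linarith [hx.2]
      congr 1
      field_simp
    rw [e, ← ofReal_integral_eq_lintegral_ofReal (aux_int μ hb1 hae hb1)
      (by filter_upwards [hae] with x hx using (aux_bound hb1 hb1 hx).1),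
      ← ENNReal.ofReal_mul hα.le] at hαc
    exact ENNReal.ofReal_lt_one.1 hαc
  refine ⟨?_, ?_⟩
  · obtain ⟨w₁, hbw, hw1, hbig⟩ := aux_near μ hb1 hae hα hαc'
    have hc := (aux_cont μ hb1 hae hbw).const_mul α
    obtain ⟨w, hw, hweq⟩ := intermediate_value_Ioo' hw1.le hc ⟨hone, hbig⟩
    have hw0 : 0 < w := by linarith [hw.1]
    have hu : 1 - w⁻¹ ∈ Set.Ioo ξ 0 := by
      constructor
      · have : w⁻¹ < b⁻¹ := inv_strictAnti₀ hb0 (by linarith [hw.1])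
        linarith
      · have : 1 < w⁻¹ := (one_lt_inv₀ hw0).2 hw.2
        linarith
    have hww : (1 - (1 - w⁻¹))⁻¹ = w := by simp
    refine ⟨1 - w⁻¹, ⟨hu, (hiff _ hu).2 (by rw [hww]; exact hweq)⟩, ?_⟩
    rintro u ⟨hu', hequ⟩
    have h1 := (hiff u hu').1 hequ
    have hweq' : α * ∫ x, x * (1 - x) / (w - x) ^ 2 ∂μ = 1 := hweq
    have h2 : (1 - u)⁻¹ = w := by
      rcases lt_trichotomy (1 - u)⁻¹ w with h | h | h
      · have := mul_lt_mul_of_pos_left (hanti _ _ (hwr u hu').1 h) hα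
        linarith
      · exact h
      · have := mul_lt_mul_of_pos_left (hanti _ _ (by linarith [hw.1]) h) hα
        linarith
    rw [← h2]; simp
  · intro u hu hequ
    have h1 := (hiff u hu).1 hequ
    rw [hK u hu]
    obtain ⟨hw1, hw2⟩ := hwr u hu
    rw [one_div]
    generalize (1 - u)⁻¹ = w at *
    have hlt : ∫ x, x / (w - x) ∂μ < ∫ x, x * (1 - x) / (w - x) ^ 2 ∂μ := by
      have key : ∀ᵐ x ∂μ, x ≠ 0 → x / (w - x) < x * (1 - x) / (w - x) ^ 2 := by
        filter_upwards [hae] with x hx hx0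
        have h0 : 0 < x := lt_of_le_of_ne hx.1 (Ne.symm hx0)
        have h1 : 0 < w - x := by linarith [hx.2]
        rw [div_lt_div_iff₀ h1 (by positivity)]
        have h3 : 0 < x * (w - x) := mul_pos h0 h1
        nlinarith
      refine aux_lt μ hne (aux_int2 μ hb1 hae hw1) (aux_int μ hb1 hae hw1) ?_ key
      filter_upwards [key] with x hx
      rcases eq_or_ne x 0 with h | h
      · simp [h]
      · exact (hx h).le
    have hnn : 0 ≤ ∫ x, x / (w - x) ∂μ := by
      refine integral_nonneg_of_ae ?_
      filter_upwards [hae] with x hx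
      exact div_nonneg hx.1 (by linarith [hx.2])
    have h2 := mul_lt_mul_of_pos_left hlt hα
    rw [h1] at h2
    have h3 : 0 ≤ α * ∫ x, x / (w - x) ∂μ := mul_nonneg hα.le hnn
    constructor <;> nlinarith
end
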